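/- arXiv:2201.05465 — 13 statements merged into one kernel-verified Lean document; each statement's English description precedes it below -/
import Mathlib

section
/- The set function val is submodular when 1/3 < α ≤ 1 and supermodular when 0 ≤ α < 1/3; that is, for all X ⊆ Y ⊆ V and every vertex v ∈ V∖Y: if 1/3 < α ≤ 1 then val(X ∪ {v}) − val(X) ≥ val(Y ∪ {v}) − val(Y), and if 0 ≤ α < 1/3 then val(X ∪ {v}) − val(X) ≤ val(Y ∪ {v}) − val(Y). -/
open Finset

variable {V : Type*} [Fintype V] [DecidableEq V]

/-- Number of edges of `G` with both endpoints in `S`. -/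
def mIn (G : SimpleGraph V) [DecidableRel G.Adj] (S : Finset V) : ℕ :=
  (G.edgeFinset.filter (fun e => ∀ v ∈ e, v ∈ S)).card

/-- Number of edges of `G` with exactly one endpoint in `S`. -/
def mCut (G : SimpleGraph V) [DecidableRel G.Adj] (S : Finset V) : ℕ :=
  (G.edgeFinset.filter (fun e => (∃ v ∈ e, v ∈ S) ∧ ∃ v ∈ e, v ∉ S)).card

/-- `val(S) = α·(m(S, V∖S) + counter(S)) + (1−α)·m(S)`. -/
noncomputable def val (G : SimpleGraph V) [DecidableRel G.Adj] (counter : V → ℕ) (α : ℝ)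
    (S : Finset V) : ℝ :=
  α * ((mCut G S : ℝ) + ∑ v ∈ S, (counter v : ℝ)) + (1 - α) * (mIn G S : ℝ)

/-- `degc(v) = deg(v) + counter(v)`. -/
def degc (G : SimpleGraph V) [DecidableRel G.Adj] (counter : V → ℕ) (v : V) : ℕ :=
  G.degree v + counter v

/-- `contribution(v, T) = α·degc(v) + (1−3α)·|N(v) ∩ T|`. -/
noncomputable def contribution (G : SimpleGraph V) [DecidableRel G.Adj] (counter : V → ℕ)
    (α : ℝ) (v : V) (T : Finset V) : ℝ :=
  α * (degc G counter v : ℝ) + (1 - 3 * α) * ((G.neighborFinset v ∩ T).card : ℝ)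

/-- Contribution of one edge to `val`. -/
noncomputable def edgeW (α : ℝ) (S : Finset V) (e : Sym2 V) : ℝ :=
  α * (if (∃ v ∈ e, v ∈ S) ∧ ∃ v ∈ e, v ∉ S then 1 else 0)
    + (1 - α) * (if ∀ v ∈ e, v ∈ S then 1 else 0)

lemma val_eq_sum (G : SimpleGraph V) [DecidableRel G.Adj] (counter : V → ℕ) (α : ℝ)
    (S : Finset V) :
    val G counter α S = ∑ e ∈ G.edgeFinset, edgeW α S e + α * ∑ v ∈ S, (counter v : ℝ) := by
  simp only [_root_.val, edgeW, mCut, mIn, Finset.sum_add_distrib, ← Finset.mul_sum, Finset.sum_boole]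
  ring

lemma edgeW_diff (α : ℝ) (X Y : Finset V) (hXY : X ⊆ Y) (v : V) (hv : v ∉ Y)
    (e : Sym2 V) (he : ¬ e.IsDiag) :
    ∃ k : ℝ, 0 ≤ k ∧ edgeW α (insert v X) e - edgeW α X e + (1 - 3 * α) * k
      = edgeW α (insert v Y) e - edgeW α Y e := by
  induction e using Sym2.ind with
  | _ a b =>
  have hab : a ≠ b := by simpa using he
  have hvX : v ∉ X := fun h => hv (hXY h)
  have ha := @hXY a
  have hb := @hXY b
  by_cases hav : a = v
  · subst hav
    by_cases h1 : b ∈ X <;> by_cases h2 : b ∈ Y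
    · exact ⟨0, le_rfl, by simp [edgeW, *, hab.symm]⟩
    · exact absurd (hb h1) h2
    · exact ⟨1, zero_le_one, by simp [edgeW, *, hab.symm]; ring⟩
    · exact ⟨0, le_rfl, by simp [edgeW, *, hab.symm]⟩
  by_cases hbv : b = v
  · subst hbv
    by_cases h1 : a ∈ X <;> by_cases h2 : a ∈ Y
    · exact ⟨0, le_rfl, by simp [edgeW, *]⟩
    · exact absurd (ha h1) h2
    · exact ⟨1, zero_le_one, by simp [edgeW, *]; ring⟩
    · exact ⟨0, le_rfl, by simp [edgeW, *]⟩
  · exact ⟨0, le_rfl, by simp [edgeW, hav, hbv]⟩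

/-- `val` is submodular for `1/3 < α ≤ 1` and supermodular for `0 ≤ α < 1/3`. -/
theorem val_submodular_supermodular (G : SimpleGraph V) [DecidableRel G.Adj]
    (counter : V → ℕ) (α : ℝ) (X Y : Finset V) (hXY : X ⊆ Y) (v : V) (hv : v ∉ Y) :
    (1 / 3 < α ∧ α ≤ 1 →
      val G counter α (insert v X) - val G counter α X ≥
        val G counter α (insert v Y) - val G counter α Y) ∧
    (0 ≤ α ∧ α < 1 / 3 →
      val G counter α (insert v X) - val G counter α X ≤
        val G counter α (insert v Y) - val G counter α Y) := by
  have hvX : v ∉ X := fun h => hv (hXY h)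
  have key : ∃ k : ℝ, 0 ≤ k ∧
      val G counter α (insert v X) - val G counter α X + (1 - 3 * α) * k
        = val G counter α (insert v Y) - val G counter α Y := by
    have h : ∀ e : Sym2 V, ∃ k : ℝ, e ∈ G.edgeFinset → (0 ≤ k ∧
        edgeW α (insert v X) e - edgeW α X e + (1 - 3 * α) * k
          = edgeW α (insert v Y) e - edgeW α Y e) := by
      intro e
      by_cases he : e ∈ G.edgeFinset
      · obtain ⟨k, hk⟩ := edgeW_diff α X Y hXY v hv e
          (G.not_isDiag_of_mem_edgeSet (SimpleGraph.mem_edgeFinset.mp he))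
        exact ⟨k, fun _ => hk⟩
      · exact ⟨0, fun h => absurd h he⟩
    choose k hk using h
    refine ⟨∑ e ∈ G.edgeFinset, k e, Finset.sum_nonneg fun e he => (hk e he).1, ?_⟩
    have hs := Finset.sum_congr rfl fun e he => (hk e he).2
    simp only [Finset.sum_add_distrib, Finset.sum_sub_distrib, ← Finset.mul_sum] at hs
    simp only [val_eq_sum, Finset.sum_insert hv, Finset.sum_insert hvX]
    linarith
  obtain ⟨k, hk, h⟩ := key
  constructor
  · rintro ⟨h1, -⟩
    nlinarith [mul_nonneg (by linarith : (0 : ℝ) ≤ 3 * α - 1) hk]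
  · rintro ⟨-, h1⟩
    nlinarith [mul_nonneg (by linarith : (0 : ℝ) ≤ 1 - 3 * α) hk]
end

section
/- Let S ⊆ V, let v ∈ S and let v' ∈ V∖S. If contribution(v', S∖{v}) ≥ contribution(v, S∖{v}), then val((S∖{v}) ∪ {v'}) ≥ val(S); symmetrically, if contribution(v', S∖{v}) ≤ contribution(v, S∖{v}), then val((S∖{v}) ∪ {v'}) ≤ val(S). -/
open Finset

variable {V : Type*} [Fintype V] [DecidableEq V]

/-- Edges at `v` with an endpoint in `T`, where `v ∉ T`, correspond to neighbors of `v` in `T`. -/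
theorem card_edges_to (G : SimpleGraph V) [DecidableRel G.Adj] (T : Finset V) (v : V)
    (hv : v ∉ T) :
    (G.edgeFinset.filter (fun e => v ∈ e ∧ ∃ w ∈ e, w ∈ T)).card =
      (G.neighborFinset v ∩ T).card := by
  symm
  apply Finset.card_bij (fun w _ => s(v, w))
  · intro w hw
    simp only [Finset.mem_inter, SimpleGraph.mem_neighborFinset] at hw
    simp only [Finset.mem_filter, SimpleGraph.mem_edgeFinset, SimpleGraph.mem_edgeSet]
    exact ⟨hw.1, Sym2.mem_mk_left v w, w, Sym2.mem_mk_right v w, hw.2⟩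
  · intro a _ b _ h
    exact Sym2.congr_right.mp h
  · intro e he
    simp only [Finset.mem_filter, SimpleGraph.mem_edgeFinset] at he
    obtain ⟨he, hve, w, hwe, hw⟩ := he
    have hne : v ≠ w := fun h => hv (h ▸ hw)
    have hee : e = s(v, w) := (Sym2.mem_and_mem_iff hne).mp ⟨hve, hwe⟩
    subst hee
    refine ⟨w, ?_, rfl⟩
    simpa [hw] using he

theorem card_edges_at (G : SimpleGraph V) [DecidableRel G.Adj] (v : V) :
    (G.edgeFinset.filter (fun e => v ∈ e)).card = G.degree v := by
  rw [← SimpleGraph.card_incidenceFinset_eq_degree, SimpleGraph.incidenceFinset_eq_filter]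

theorem mIn_insert (G : SimpleGraph V) [DecidableRel G.Adj] (T : Finset V) (v : V)
    (hv : v ∉ T) :
    mIn G (insert v T) = mIn G T + (G.neighborFinset v ∩ T).card := by
  rw [← card_edges_to G T v hv]
  simp only [mIn, Finset.card_filter, ← Finset.sum_add_distrib]
  apply Finset.sum_congr rfl
  intro e he
  induction e using Sym2.ind with
  | _ a b =>
    have hab : a ≠ b := by
      have : G.Adj a b := by simpa using he
      exact this.ne
    simp only [Sym2.mem_iff, forall_eq_or_imp, forall_eq, exists_eq_or_imp, exists_eq_left,
      Finset.mem_insert]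
    grind

theorem mCut_insert (G : SimpleGraph V) [DecidableRel G.Adj] (T : Finset V) (v : V)
    (hv : v ∉ T) :
    mCut G (insert v T) + 2 * (G.neighborFinset v ∩ T).card = mCut G T + G.degree v := by
  rw [← card_edges_to G T v hv, ← card_edges_at]
  simp only [mCut, Finset.card_filter, Finset.mul_sum, ← Finset.sum_add_distrib]
  apply Finset.sum_congr rfl
  intro e he
  induction e using Sym2.ind with
  | _ a b =>
    have hab : a ≠ b := by
      have : G.Adj a b := by simpa using he
      exact this.ne
    simp only [Sym2.mem_iff, exists_eq_or_imp, exists_eq_left, Finset.mem_insert]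
    grind

theorem val_insert (G : SimpleGraph V) [DecidableRel G.Adj] (counter : V → ℕ) (α : ℝ)
    (T : Finset V) (v : V) (hv : v ∉ T) :
    val G counter α (insert v T) = val G counter α T + contribution G counter α v T := by
  have h1 : (mIn G (insert v T) : ℝ) = mIn G T + (G.neighborFinset v ∩ T).card := by
    exact_mod_cast mIn_insert G T v hv
  have h2 : (mCut G (insert v T) : ℝ) =
      mCut G T + G.degree v - 2 * (G.neighborFinset v ∩ T).card := by
    rw [eq_sub_iff_add_eq]
    exact_mod_cast mCut_insert G T v hv
  simp only [_root_.val, contribution, degc, h1, h2, Finset.sum_insert hv]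
  push_cast
  ring

/-- Exchange argument: replacing `v ∈ S` by a vertex `v' ∉ S` whose contribution
with respect to `S∖{v}` is at least (resp. at most) that of `v` does not decrease
(resp. increase) `val`. -/
theorem val_exchange (G : SimpleGraph V) [DecidableRel G.Adj]
    (counter : V → ℕ) (α : ℝ) (S : Finset V) (v : V) (hv : v ∈ S)
    (v' : V) (hv' : v' ∉ S) :
    (contribution G counter α v' (S.erase v) ≥ contribution G counter α v (S.erase v) →
      val G counter α (insert v' (S.erase v)) ≥ val G counter α S) ∧
    (contribution G counter α v' (S.erase v) ≤ contribution G counter α v (S.erase v) →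
      val G counter α (insert v' (S.erase v)) ≤ val G counter α S) := by
  have h1 := val_insert G counter α (S.erase v) v (Finset.notMem_erase v S)
  have h2 := val_insert G counter α (S.erase v) v'
    (fun h => hv' (Finset.mem_of_mem_erase h))
  rw [Finset.insert_erase hv] at h1
  constructor <;> intro h <;> linarith
end

section
/- Suppose 1/3 < α ≤ 1. For every T ⊆ V and every finite set F ⊆ V∖T with |F| = r, there is an enumeration v_1, …, v_r of F such that, writing S_i = T ∪ {v_1, …, v_{i−1}}, the sequence contribution(v_1, S_1) ≥ contribution(v_2, S_2) ≥ … ≥ contribution(v_r, S_r) is non-increasing. If instead 0 ≤ α < 1/3, there is an enumeration of F for which this sequence is non-decreasing. -/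
open Finset

variable {V : Type*} [Fintype V] [DecidableEq V]

theorem greedy_aux {W : Type*} [DecidableEq W] (f : W → Finset W → ℝ)
    (hf : ∀ x S S', S ⊆ S' → f x S' ≤ f x S) (r : ℕ) :
    ∀ (T F : Finset W), F.card = r →
      ∃ v : Fin r → W, Function.Injective v ∧ Finset.image v Finset.univ = F ∧
        ∀ i j : Fin r, i ≤ j →
          f (v j) (T ∪ Finset.image v (Finset.univ.filter (fun l => l < j))) ≤
            f (v i) (T ∪ Finset.image v (Finset.univ.filter (fun l => l < i))) := by
  induction r with
  | zero =>
    intro T F hF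
    refine ⟨Fin.elim0, fun i => i.elim0, ?_, fun i => i.elim0⟩
    rw [Finset.card_eq_zero] at hF
    subst hF
    simp
  | succ n ih =>
    intro T F hF
    have hne : F.Nonempty := by
      rw [← Finset.card_pos]; omega
    obtain ⟨x, hx, hmax⟩ := Finset.exists_max_image F (fun y => f y T) hne
    obtain ⟨w, hinj, him, hmono⟩ := ih (insert x T) (F.erase x) (by
      rw [Finset.card_erase_of_mem hx]; omega)
    have hw : ∀ i, w i ∈ F.erase x := fun i => by
      rw [← him]; exact Finset.mem_image_of_mem _ (Finset.mem_univ i)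
    have key : ∀ i : Fin n,
        T ∪ Finset.image (Fin.cons x w : Fin (n + 1) → W)
          (Finset.univ.filter (fun l => l < i.succ)) =
        insert x T ∪ Finset.image w (Finset.univ.filter (fun l => l < i)) := by
      intro i
      ext y
      simp only [Finset.mem_union, Finset.mem_image, Finset.mem_filter, Finset.mem_univ,
        true_and, Finset.mem_insert, Fin.exists_fin_succ, Fin.cons_zero, Fin.cons_succ,
        Fin.succ_lt_succ_iff, Fin.succ_pos]
      grind
    refine ⟨Fin.cons x w, ?_, ?_, ?_⟩
    · rw [Fin.cons_injective_iff]
      refine ⟨?_, hinj⟩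
      rintro ⟨i, hi⟩
      exact Finset.ne_of_mem_erase (hw i) hi
    · have h2 : ∀ y, (∃ i, w i = y) ↔ y ∈ F.erase x := fun y => by
        rw [← him]; simp
      ext y
      simp only [Finset.mem_image, Finset.mem_univ, true_and, Fin.exists_fin_succ,
        Fin.cons_zero, Fin.cons_succ, h2, Finset.mem_erase]
      grind
    · intro i j hij
      refine Fin.cases ?_ (fun i => ?_) i hij
      all_goals clear hij
      · intro _
        have h0 : f x T = f ((Fin.cons x w : Fin (n + 1) → W) 0)
            (T ∪ Finset.image (Fin.cons x w : Fin (n + 1) → W)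
              (Finset.univ.filter (fun l => l < 0))) := by simp
        rw [← h0]
        refine (hf _ _ _ Finset.subset_union_left).trans (hmax _ ?_)
        refine Fin.cases ?_ (fun j => ?_) j
        · simpa using hx
        · simpa using Finset.mem_of_mem_erase (hw j)
      · refine Fin.cases ?_ (fun j => ?_) j
        · intro h
          exact absurd h (by simp [Fin.le_def])
        · intro h
          rw [key, key, Fin.cons_succ, Fin.cons_succ]
          exact hmono i j (Fin.succ_le_succ_iff.mp h)

/-- Greedy ordering: for `1/3 < α ≤ 1` every finite `F ⊆ V∖T` admits an enumeration
along which the contributions (w.r.t. the growing prefix added to `T`) are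
non-increasing; for `0 ≤ α < 1/3` an enumeration along which they are non-decreasing. -/
theorem exists_monotone_enumeration (G : SimpleGraph V) [DecidableRel G.Adj]
    (counter : V → ℕ) (α : ℝ) (T F : Finset V) (hTF : Disjoint F T)
    (r : ℕ) (hF : F.card = r) :
    (1 / 3 < α ∧ α ≤ 1 →
      ∃ v : Fin r → V, Function.Injective v ∧ Finset.image v Finset.univ = F ∧
        ∀ i j : Fin r, i ≤ j →
          contribution G counter α (v j)
              (T ∪ Finset.image v (Finset.univ.filter (fun l => l < j))) ≤
            contribution G counter α (v i)
              (T ∪ Finset.image v (Finset.univ.filter (fun l => l < i)))) ∧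
    (0 ≤ α ∧ α < 1 / 3 →
      ∃ v : Fin r → V, Function.Injective v ∧ Finset.image v Finset.univ = F ∧
        ∀ i j : Fin r, i ≤ j →
          contribution G counter α (v i)
              (T ∪ Finset.image v (Finset.univ.filter (fun l => l < i))) ≤
            contribution G counter α (v j)
              (T ∪ Finset.image v (Finset.univ.filter (fun l => l < j)))) := by
  have hc : ∀ (x : V) (S S' : Finset V), S ⊆ S' →
      ((G.neighborFinset x ∩ S).card : ℝ) ≤ ((G.neighborFinset x ∩ S').card : ℝ) := by
    intro x S S' h
    exact_mod_cast Finset.card_le_card (Finset.inter_subset_inter_left h)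
  constructor
  · rintro ⟨h1, _⟩
    refine greedy_aux (contribution G counter α) ?_ r T F hF
    intro x S S' h
    have := hc x S S' h
    unfold contribution
    nlinarith
  · rintro ⟨_, h1⟩
    obtain ⟨v, hv, hi, hm⟩ := greedy_aux (fun x S => - contribution G counter α x S) (by
      intro x S S' h
      have := hc x S S' h
      unfold contribution
      nlinarith) r T F hF
    exact ⟨v, hv, hi, fun i j hij => neg_le_neg_iff.mp (hm i j hij)⟩
end

section
/- Suppose 1/3 < α ≤ 1. Let T ⊆ V, let k ∈ ℕ with k' := k − |T| ≥ 1, let t be a real number, and set t' := t − val(T). Suppose there exists a set S with T ⊆ S ⊆ V, |S| = k and val(S) ≥ t, and let v ∈ V∖T be a vertex satisfying contribution(v, T) ≥ t'/k' + (3α−1)·(k−1). Then there exists a set S' with T ⊆ S' ⊆ V, |S'| = k, v ∈ S' and val(S') ≥ t. -/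
open Finset

variable {V : Type*} [Fintype V] [DecidableEq V]

lemma sv_mIn_insert (G : SimpleGraph V) [DecidableRel G.Adj] (S : Finset V) (v : V)
    (hv : v ∉ S) : mIn G (insert v S) = mIn G S + (G.neighborFinset v ∩ S).card := by
  have hA : ((G.neighborFinset v ∩ S).image (fun w => s(v, w))).card
      = (G.neighborFinset v ∩ S).card :=
    Finset.card_image_of_injective _ (fun a b h => Sym2.congr_right.1 h)
  unfold mIn
  rw [← hA, ← Finset.card_union_of_disjoint]
  · congr 1
    ext e
    induction e using Sym2.ind with
    | _ a b =>
      have := G.ne_of_adj (a := a) (b := b)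
      have := G.adj_comm a b
      simp only [Finset.mem_filter, Finset.mem_union, Finset.mem_image, Finset.mem_inter,
        SimpleGraph.mem_neighborFinset, SimpleGraph.mem_edgeFinset, SimpleGraph.mem_edgeSet,
        Sym2.mem_iff, Finset.mem_insert, Sym2.eq_iff]
      grind
  · rw [Finset.disjoint_left]
    intro e he he2
    simp only [Finset.mem_filter, Finset.mem_image] at he he2
    obtain ⟨w, _, rfl⟩ := he2
    exact hv (he.2 v (by simp))

lemma sv_mCut_insert (G : SimpleGraph V) [DecidableRel G.Adj] (S : Finset V) (v : V)
    (hv : v ∉ S) : mCut G (insert v S) + 2 * (G.neighborFinset v ∩ S).card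
      = mCut G S + G.degree v := by
  have inj : Function.Injective (fun w => s(v, w)) := (fun a b h => Sym2.congr_right.1 h)
  have hA : ((G.neighborFinset v ∩ S).image (fun w => s(v, w))).card
      = (G.neighborFinset v ∩ S).card := Finset.card_image_of_injective _ inj
  have hB : ((G.neighborFinset v \ S).image (fun w => s(v, w))).card
      = (G.neighborFinset v \ S).card := Finset.card_image_of_injective _ inj
  have hd : (G.neighborFinset v ∩ S).card + (G.neighborFinset v \ S).card = G.degree v := by
    rw [← SimpleGraph.card_neighborFinset_eq_degree]
    exact Finset.card_inter_add_card_sdiff _ _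
  have key : mCut G (insert v S) + (G.neighborFinset v ∩ S).card
      = mCut G S + (G.neighborFinset v \ S).card := by
    unfold mCut
    rw [← hA, ← hB, ← Finset.card_union_of_disjoint, ← Finset.card_union_of_disjoint]
    · congr 1
      ext e
      induction e using Sym2.ind with
      | _ a b =>
        have := G.ne_of_adj (a := a) (b := b)
        have := G.adj_comm a b
        simp only [Finset.mem_filter, Finset.mem_union, Finset.mem_image, Finset.mem_inter,
          SimpleGraph.mem_neighborFinset, SimpleGraph.mem_edgeFinset, SimpleGraph.mem_edgeSet,
          Sym2.mem_iff, Finset.mem_insert, Sym2.eq_iff, Finset.mem_sdiff]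
        grind
    · rw [Finset.disjoint_left]
      intro e he he2
      simp only [Finset.mem_filter, Finset.mem_image] at he he2
      obtain ⟨w, hw, rfl⟩ := he2
      simp only [Sym2.mem_iff, Finset.mem_sdiff] at *
      grind
    · rw [Finset.disjoint_left]
      intro e he he2
      simp only [Finset.mem_filter, Finset.mem_image] at he he2
      obtain ⟨w, hw, rfl⟩ := he2
      simp only [Sym2.mem_iff, Finset.mem_inter] at *
      grind
  omega

lemma sv_val_insert (G : SimpleGraph V) [DecidableRel G.Adj] (counter : V → ℕ) (α : ℝ)
    (S : Finset V) (v : V) (hv : v ∉ S) :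
    val G counter α (insert v S) = val G counter α S + contribution G counter α v S := by
  have h1 : (mIn G (insert v S) : ℝ) = mIn G S + (G.neighborFinset v ∩ S).card := by
    exact_mod_cast sv_mIn_insert G S v hv
  have h2 : (mCut G (insert v S) : ℝ) + 2 * (G.neighborFinset v ∩ S).card
      = mCut G S + G.degree v := by
    exact_mod_cast sv_mCut_insert G S v hv
  have h3 : (mCut G (insert v S) : ℝ) = mCut G S + G.degree v
      - 2 * (G.neighborFinset v ∩ S).card := by linarith
  unfold _root_.val contribution degc
  rw [h1, h3, Finset.sum_insert hv]
  push_cast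
  ring

lemma sv_contribution_anti (G : SimpleGraph V) [DecidableRel G.Adj] (counter : V → ℕ) (α : ℝ)
    (hα : 1 / 3 < α) (A B : Finset V) (h : A ⊆ B) (v : V) :
    contribution G counter α v B ≤ contribution G counter α v A := by
  have : ((G.neighborFinset v ∩ A).card : ℝ) ≤ (G.neighborFinset v ∩ B).card := by
    exact_mod_cast Finset.card_le_card (Finset.inter_subset_inter_left h)
  unfold contribution
  nlinarith

lemma sv_sum (G : SimpleGraph V) [DecidableRel G.Adj] (counter : V → ℕ) (α : ℝ)
    (hα : 1 / 3 < α) (T W : Finset V) (h : Disjoint T W) :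
    ∑ u ∈ W, contribution G counter α u ((T ∪ W).erase u)
      ≤ val G counter α (T ∪ W) - val G counter α T := by
  induction W using Finset.induction_on with
  | empty => simp
  | insert w W hw ih =>
    rw [Finset.disjoint_insert_right] at h
    have hwn : w ∉ T ∪ W := by simp [hw, h.1]
    rw [Finset.sum_insert hw, Finset.union_insert, sv_val_insert G counter α _ w hwn,
      Finset.erase_insert hwn]
    have h2 : ∑ u ∈ W, contribution G counter α u ((insert w (T ∪ W)).erase u)
        ≤ ∑ u ∈ W, contribution G counter α u ((T ∪ W).erase u) :=
      Finset.sum_le_sum fun u _ => sv_contribution_anti G counter α hα _ _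
        (Finset.erase_subset_erase _ (Finset.subset_insert _ _)) u
    have := ih h.2
    linarith


/-- Inclusion of a satisfactory vertex: for `1/3 < α ≤ 1`, if some solution `S`
(`T ⊆ S`, `|S| = k`, `val(S) ≥ t`) exists and `v ∉ T` has contribution at least
`t'/k' + (3α−1)(k−1)` (with `k' = k − |T|`, `t' = t − val(T)`), then some solution
contains `v`. -/
theorem satisfactory_vertex_inclusion (G : SimpleGraph V) [DecidableRel G.Adj]
    (counter : V → ℕ) (α : ℝ) (hα1 : 1 / 3 < α) (hα2 : α ≤ 1)
    (T : Finset V) (k : ℕ) (t : ℝ) (hTk : T.card < k)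
    (S : Finset V) (hTS : T ⊆ S) (hScard : S.card = k) (hSval : val G counter α S ≥ t)
    (v : V) (hvT : v ∉ T)
    (hv : contribution G counter α v T ≥
      (t - val G counter α T) / ((k : ℝ) - T.card) + (3 * α - 1) * ((k : ℝ) - 1)) :
    ∃ S' : Finset V, T ⊆ S' ∧ S'.card = k ∧ v ∈ S' ∧ val G counter α S' ≥ t := by
  by_cases hvS : v ∈ S
  · exact ⟨S, hTS, hScard, hvS, hSval⟩
  have hU : T ∪ S \ T = S := Finset.union_sdiff_of_subset hTS
  have hsum := sv_sum G counter α hα1 T (S \ T) Finset.disjoint_sdiff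
  rw [hU] at hsum
  have hk : (0 : ℝ) < (k : ℝ) - T.card := by
    have : (T.card : ℝ) < k := by exact_mod_cast hTk
    linarith
  have hcard : ((S \ T).card : ℝ) = (k : ℝ) - T.card := by
    rw [Finset.cast_card_sdiff hTS, hScard]
  have hne : (S \ T).Nonempty := by
    rw [← Finset.card_pos]
    have : (0 : ℝ) < (S \ T).card := by rw [hcard]; exact hk
    exact_mod_cast this
  obtain ⟨u, hu, hule⟩ : ∃ u ∈ S \ T, contribution G counter α u (S.erase u)
      ≤ (val G counter α S - val G counter α T) / ((k : ℝ) - T.card) := by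
    apply Finset.exists_le_of_sum_le hne
    rw [Finset.sum_const, nsmul_eq_mul, hcard, mul_div_cancel₀ _ hk.ne']
    exact hsum
  rw [Finset.mem_sdiff] at hu
  have hvn : v ∉ S.erase u := fun h => hvS (Finset.mem_of_mem_erase h)
  have hce : (S.erase u).card = k - 1 := by rw [Finset.card_erase_of_mem hu.1, hScard]
  have hTe : T ⊆ S.erase u := Finset.subset_erase.2 ⟨hTS, hu.2⟩
  refine ⟨insert v (S.erase u), hTe.trans (Finset.subset_insert _ _), ?_,
    Finset.mem_insert_self _ _, ?_⟩
  · rw [Finset.card_insert_of_notMem hvn, hce]; omega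
  have e1 := sv_val_insert G counter α (S.erase u) u (Finset.notMem_erase u S)
  rw [Finset.insert_erase hu.1] at e1
  rw [sv_val_insert G counter α _ v hvn]
  -- the contribution of `v` drops by at most `(3α-1)(k-1)`
  have hn : ((G.neighborFinset v ∩ S.erase u).card : ℝ) ≤ (k : ℝ) - 1 := by
    have h1 : (G.neighborFinset v ∩ S.erase u).card + 1 ≤ k := by
      have := Finset.card_le_card
        (Finset.inter_subset_right (s₁ := G.neighborFinset v) (s₂ := S.erase u))
      omega
    have : ((G.neighborFinset v ∩ S.erase u).card : ℝ) + 1 ≤ k := by exact_mod_cast h1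
    linarith
  have hc : contribution G counter α v (S.erase u)
      ≥ contribution G counter α v T - (3 * α - 1) * ((k : ℝ) - 1) := by
    have h0 : (0 : ℝ) ≤ (G.neighborFinset v ∩ T).card := Nat.cast_nonneg _
    unfold contribution
    nlinarith
  have hk1 : (1 : ℝ) ≤ (k : ℝ) - T.card := by
    have : (T.card : ℝ) + 1 ≤ k := by exact_mod_cast hTk
    linarith
  have hd : (val G counter α S - val G counter α T) / ((k : ℝ) - T.card)
      - (t - val G counter α T) / ((k : ℝ) - T.card) ≤ val G counter α S - t := by
    rw [← sub_div]
    have : val G counter α S - val G counter α T - (t - val G counter α T)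
      = val G counter α S - t := by ring
    rw [this]
    exact div_le_self (by linarith) hk1
  linarith
end

section
/- Suppose 1/3 < α ≤ 1. Let T ⊆ V with |T| ≤ k and k' := k − |T| ≥ 1, let t be a real number and set t' := t − val(T). Suppose there is a vertex u ∈ V∖T with counter(u) = 0 and contribution(u, T) ≥ t'/k' − (3α−1)·(k−1)², and let v ∈ V∖T be a vertex satisfying contribution(v, T) ≤ t'/k' + (3α−1)·(k−1). Then α·counter(v) ≤ α·deg(u) + (3α−1)·k². -/
open Finset

variable {V : Type*} [Fintype V] [DecidableEq V]

/-- Bounding the counter: for `1/3 < α ≤ 1`, if some `u ∉ T` has `counter(u) = 0` and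
contribution at least `t'/k' − (3α−1)(k−1)²`, then every `v ∉ T` with contribution at
most `t'/k' + (3α−1)(k−1)` satisfies `α·counter(v) ≤ α·deg(u) + (3α−1)·k²`. -/
theorem counter_bound (G : SimpleGraph V) [DecidableRel G.Adj]
    (counter : V → ℕ) (α : ℝ) (hα1 : 1 / 3 < α) (hα2 : α ≤ 1)
    (T : Finset V) (k : ℕ) (t : ℝ) (hTk : T.card < k)
    (u : V) (huT : u ∉ T) (hu0 : counter u = 0)
    (hu : contribution G counter α u T ≥
      (t - val G counter α T) / ((k : ℝ) - T.card) - (3 * α - 1) * ((k : ℝ) - 1) ^ 2)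
    (v : V) (hvT : v ∉ T)
    (hv : contribution G counter α v T ≤
      (t - val G counter α T) / ((k : ℝ) - T.card) + (3 * α - 1) * ((k : ℝ) - 1)) :
    α * (counter v : ℝ) ≤ α * (G.degree u : ℝ) + (3 * α - 1) * (k : ℝ) ^ 2 := by
  have hnv : ((G.neighborFinset v ∩ T).card : ℝ) + 1 ≤ k := by
    have h1 : (G.neighborFinset v ∩ T).card ≤ T.card :=
      Finset.card_le_card Finset.inter_subset_right
    have h2 : (G.neighborFinset v ∩ T).card + 1 ≤ k := by omega
    exact_mod_cast h2
  have hnu : (0 : ℝ) ≤ ((G.neighborFinset u ∩ T).card : ℝ) := Nat.cast_nonneg _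
  have hdv : (0 : ℝ) ≤ (G.degree v : ℝ) := Nat.cast_nonneg _
  have hc : 0 < 3 * α - 1 := by linarith
  have hα0 : 0 < α := by linarith
  unfold contribution degc at hu hv
  rw [hu0] at hu
  push_cast at hu hv
  generalize (t - val G counter α T) / ((k : ℝ) - T.card) = X at hu hv
  have e1 := mul_nonneg hc.le hnu
  have e2 := mul_nonneg hα0.le hdv
  have e3 := mul_le_mul_of_nonneg_left hnv hc.le
  nlinarith
end

section
/- For all integers q ≥ 1, b ≥ 1 and c ≥ 1, every c-closed finite simple graph with at least (c−1)·binom(b−1, 2) + (q−1)·(b−1) + 1 vertices contains a clique of size q or an independent set of size b. -/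
open Finset

variable {V : Type*} [Fintype V] [DecidableEq V]

/-- `I` is an independent set of `G`: pairwise non-adjacent vertices. -/
def IndepOn (G : SimpleGraph V) (I : Finset V) : Prop :=
  ∀ u ∈ I, ∀ w ∈ I, u ≠ w → ¬ G.Adj u w

/-- `G` is `c`-closed: every pair of distinct non-adjacent vertices has at most
`c − 1` common neighbors. -/
def CClosed (G : SimpleGraph V) [DecidableRel G.Adj] (c : ℕ) : Prop :=
  ∀ u v : V, u ≠ v → ¬ G.Adj u v → (G.neighborFinset u ∩ G.neighborFinset v).card ≤ c - 1

/-- Ramsey-type bound in `c`-closed graphs: every `c`-closed graph on at least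
`(c−1)·C(b−1,2) + (q−1)(b−1) + 1` vertices contains a clique of size `q` or an
independent set of size `b`. -/
theorem cclosed_ramsey (G : SimpleGraph V) [DecidableRel G.Adj]
    (q b c : ℕ) (hq : 1 ≤ q) (hb : 1 ≤ b) (hc : 1 ≤ c) (hG : CClosed G c)
    (hcard : (c - 1) * Nat.choose (b - 1) 2 + (q - 1) * (b - 1) + 1 ≤ Fintype.card V) :
    (∃ K : Finset V, K.card = q ∧ G.IsClique (K : Set V)) ∨
      (∃ I : Finset V, I.card = b ∧ IndepOn G I) := by
  classical
  by_contra hcon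
  push Not at hcon
  obtain ⟨hK, hI⟩ := hcon
  have hK' : ∀ K : Finset V, G.IsClique (K : Set V) → K.card ≤ q - 1 := by
    intro K hcl
    by_contra h
    obtain ⟨K', hsub, hcd⟩ := Finset.exists_subset_card_eq (show q ≤ K.card by omega)
    exact hK K' hcd (hcl.subset (by exact_mod_cast hsub))
  have hI' : ∀ I : Finset V, IndepOn G I → I.card ≤ b - 1 := by
    intro I hin
    by_contra h
    obtain ⟨I', hsub, hcd⟩ := Finset.exists_subset_card_eq (show b ≤ I.card by omega)
    exact hI I' hcd (fun u hu w hw => hin u (hsub hu) w (hsub hw))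
  obtain ⟨I, hImem, hmax⟩ := Finset.exists_max_image
    (Finset.univ.filter fun I : Finset V => IndepOn G I) Finset.card
    ⟨∅, Finset.mem_filter.mpr ⟨Finset.mem_univ _, fun u hu => absurd hu (Finset.notMem_empty u)⟩⟩
  have hin : IndepOn G I := (Finset.mem_filter.mp hImem).2
  have hmax' : ∀ J : Finset V, IndepOn G J → J.card ≤ I.card := fun J hJ =>
    hmax J (Finset.mem_filter.mpr ⟨Finset.mem_univ _, hJ⟩)
  let P : V → Finset V := fun v =>
    Finset.univ.filter fun x => x = v ∨ (G.Adj v x ∧ ∀ w ∈ I, G.Adj w x → w = v)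
  let Q : Finset V → Finset V := fun s => Finset.univ.filter fun x => ∀ w ∈ s, G.Adj w x
  have hP : ∀ v ∈ I, (P v).card ≤ q - 1 := by
    intro v hv
    apply hK'
    intro x hx y hy hxy
    simp only [P, Finset.coe_filter, Finset.mem_univ, true_and, Set.mem_ofPred_eq] at hx hy
    rcases hx with rfl | ⟨hvx, hx⟩
    · rcases hy with rfl | ⟨hvy, hy⟩
      · exact absurd rfl hxy
      · exact hvy
    · rcases hy with rfl | ⟨hvy, hy⟩
      · exact hvx.symm
      · by_contra hnadj
        have hxI : x ∉ I := fun h => hin v hv x h hvx.ne hvx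
        have hyI : y ∉ I := fun h => hin v hv y h hvy.ne hvy
        have hJ : IndepOn G (insert x (insert y (I.erase v))) := by
          intro u hu w hw huw hadj
          have hs := hadj.symm
          simp only [Finset.mem_insert, Finset.mem_erase] at hu hw
          rcases hu with rfl | rfl | ⟨huv, hu⟩ <;> rcases hw with rfl | rfl | ⟨hwv, hw⟩
          · exact huw rfl
          · exact hnadj hadj
          · exact hwv (hx w hw hs)
          · exact hnadj hs
          · exact huw rfl
          · exact hwv (hy w hw hs)
          · exact huv (hx u hu hadj)
          · exact huv (hy u hu hadj)
          · exact hin u hu w hw huw hadj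
        have h1 := hmax' _ hJ
        rw [Finset.card_insert_of_notMem (by simp [hxy, hxI]),
          Finset.card_insert_of_notMem (by simp [hyI]), Finset.card_erase_of_mem hv] at h1
        have := Finset.card_pos.mpr ⟨v, hv⟩
        omega
  have hQ : ∀ s ∈ I.powersetCard 2, (Q s).card ≤ c - 1 := by
    intro s hs
    rw [Finset.mem_powersetCard] at hs
    obtain ⟨u, v, huv, rfl⟩ := Finset.card_eq_two.mp hs.2
    have hu : u ∈ I := hs.1 (by simp)
    have hv : v ∈ I := hs.1 (by simp)
    refine le_trans (Finset.card_le_card ?_) (hG u v huv (hin u hu v hv huv))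
    intro x hx
    simpa [Q] using hx
  have hcover : (Finset.univ : Finset V) ⊆ (I.powersetCard 2).biUnion Q ∪ I.biUnion P := by
    intro x _
    by_cases hxI : x ∈ I
    · exact Finset.mem_union_right _ (Finset.mem_biUnion.mpr ⟨x, hxI, by simp [P]⟩)
    have hex : ∃ v ∈ I, G.Adj v x := by
      by_contra hno
      push Not at hno
      have hJ : IndepOn G (insert x I) := by
        intro u hu w hw huw hadj
        rcases Finset.mem_insert.mp hu with rfl | hu2 <;>
          rcases Finset.mem_insert.mp hw with rfl | hw2
        · exact huw rfl
        · exact hno w hw2 hadj.symm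
        · exact hno u hu2 hadj
        · exact hin u hu2 w hw2 huw hadj
      have h1 := hmax' _ hJ
      rw [Finset.card_insert_of_notMem hxI] at h1
      omega
    obtain ⟨v, hv, hvx⟩ := hex
    by_cases hun : ∀ w ∈ I, G.Adj w x → w = v
    · exact Finset.mem_union_right _ (Finset.mem_biUnion.mpr ⟨v, hv, by simp [P, hvx]; exact Or.inr hun⟩)
    · push Not at hun
      obtain ⟨w, hw, hwx, hwv⟩ := hun
      refine Finset.mem_union_left _ (Finset.mem_biUnion.mpr ⟨{w, v}, ?_, by simp [Q, hwx, hvx]⟩)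
      rw [Finset.mem_powersetCard]
      refine ⟨?_, Finset.card_pair hwv⟩
      intro z hz
      rcases Finset.mem_insert.mp hz with rfl | hz
      · exact hw
      · rw [Finset.mem_singleton.mp hz]; exact hv
  have h1 := (Finset.card_le_card hcover).trans (Finset.card_union_le _ _)
  have h2 := Finset.card_biUnion_le_card_mul _ _ _ hQ
  have h3 := Finset.card_biUnion_le_card_mul _ _ _ hP
  rw [Finset.card_powersetCard] at h2
  rw [Finset.card_univ] at h1
  have hIb := hI' I hin
  have h4 : I.card.choose 2 * (c - 1) ≤ (c - 1) * (b - 1).choose 2 := by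
    rw [mul_comm]
    exact Nat.mul_le_mul_left _ (Nat.choose_le_choose 2 hIb)
  have h5 : I.card * (q - 1) ≤ (q - 1) * (b - 1) := by
    rw [mul_comm]
    exact Nat.mul_le_mul_left _ hIb
  omega
end

section
/- Let c ≥ 2 and k ≥ 1 be integers and let G be a c-closed finite simple graph on vertex set V. Suppose some vertex v₀ has an independent set I₀ ⊆ N(v₀) with |I₀| > (k+1)·k^{c−1}. Then there exist an integer i with 1 ≤ i ≤ c−1, a set X of exactly i vertices with v₀ ∈ X, and an independent set I contained in the common neighborhood ∩_{x∈X} N(x), such that |I| > (k+1)·k^{c−i} and every vertex u ∈ V∖X satisfies |N(u) ∩ I| ≤ (k+1)·k^{c−i−1}. -/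
open Finset

variable {V : Type*} [Fintype V] [DecidableEq V]

/-- In a `c`-closed graph, a vertex with a huge independent set in its neighborhood
yields a set `X` of `i ≤ c−1` vertices and a large independent set `I` in the common
neighborhood of `X` such that every vertex outside `X` has few neighbors in `I`. -/
theorem cclosed_find_X_I (G : SimpleGraph V) [DecidableRel G.Adj]
    (c k : ℕ) (hc : 2 ≤ c) (hk : 1 ≤ k) (hG : CClosed G c)
    (v₀ : V) (I₀ : Finset V) (hI₀sub : I₀ ⊆ G.neighborFinset v₀)
    (hI₀ind : IndepOn G I₀) (hI₀card : (k + 1) * k ^ (c - 1) < I₀.card) :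
    ∃ (i : ℕ) (X I : Finset V), 1 ≤ i ∧ i ≤ c - 1 ∧ X.card = i ∧ v₀ ∈ X ∧
      IndepOn G I ∧ (∀ x ∈ X, I ⊆ G.neighborFinset x) ∧
      (k + 1) * k ^ (c - i) < I.card ∧
      ∀ u : V, u ∉ X → (G.neighborFinset u ∩ I).card ≤ (k + 1) * k ^ (c - i - 1) := by
  by_contra hcon
  push Not at hcon
  have key : ∀ i : ℕ, 1 ≤ i → i ≤ c → ∃ X I : Finset V, X.card = i ∧ v₀ ∈ X ∧
      IndepOn G I ∧ (∀ x ∈ X, I ⊆ G.neighborFinset x) ∧ (k + 1) * k ^ (c - i) < I.card := by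
    intro i hi
    induction i, hi using Nat.le_induction with
    | base =>
      intro _
      refine ⟨{v₀}, I₀, by simp, by simp, hI₀ind, ?_, hI₀card⟩
      intro x hx
      rw [Finset.mem_singleton] at hx
      subst hx
      exact hI₀sub
    | succ i hi ih =>
      intro hic
      obtain ⟨X, I, hX, hv, hI, hsub, hcard⟩ := ih (by omega)
      obtain ⟨u, hu, hlt⟩ := hcon i X I hi (by omega) hX hv hI hsub hcard
      refine ⟨insert u X, G.neighborFinset u ∩ I, ?_, Finset.mem_insert_of_mem hv, ?_, ?_, ?_⟩
      · rw [Finset.card_insert_of_notMem hu, hX]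
      · intro a ha b hb
        exact hI a (Finset.mem_inter.1 ha).2 b (Finset.mem_inter.1 hb).2
      · intro x hx
        rcases Finset.mem_insert.1 hx with rfl | hx
        · exact Finset.inter_subset_left
        · exact Finset.inter_subset_right.trans (hsub x hx)
      · rw [Nat.sub_add_eq]
        exact hlt
  obtain ⟨X, I, hX, -, hI, hsub, hcard⟩ := key c (by omega) le_rfl
  have h1 : 1 < I.card := by
    simp only [Nat.sub_self, pow_zero, mul_one] at hcard
    omega
  obtain ⟨a, ha, b, hb, hab⟩ := Finset.one_lt_card.1 h1
  have h2 := hG a b hab (hI a ha b hb hab)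
  have h3 : X ⊆ G.neighborFinset a ∩ G.neighborFinset b := by
    intro x hx
    have hxa := hsub x hx ha
    have hxb := hsub x hx hb
    rw [SimpleGraph.mem_neighborFinset] at hxa hxb
    simp [hxa.symm, hxb.symm]
  have h4 := Finset.card_le_card h3
  omega
end

section
/- Suppose 1/3 < α ≤ 1, let c ≥ 1 be an integer and let G be c-closed. Let S ⊆ V with |S| = k, let v ∈ S, and let X ⊆ N(v)∖S be a set of vertices with degc(x) ≥ degc(v) for every x ∈ X and |X| > (c−1)·k. Then there exists a vertex v' ∈ X such that val((S∖{v}) ∪ {v'}) ≥ val(S). -/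
open Finset

variable {V : Type*} [Fintype V] [DecidableEq V]

theorem aux_split (G : SimpleGraph V) [DecidableRel G.Adj] (u : V) (p : Sym2 V → Prop)
    [DecidablePred p] :
    (G.edgeFinset.filter p).card = (G.edgeFinset.filter (fun e => p e ∧ u ∉ e)).card
      + ((G.neighborFinset u).filter (fun w => p s(u, w))).card := by
  rw [← Finset.card_filter_add_card_filter_not (s := G.edgeFinset.filter p) (fun e => u ∉ e),
    Finset.filter_filter, Finset.filter_filter]
  congr 1
  symm
  apply Finset.card_bij (fun w _ => s(u, w))
  · intro w hw
    simpa using hw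
  · intro a _ b _ h
    have h2 : a = b ∨ u = b ∧ a = u := by simpa using h
    grind
  · intro e he
    simp only [Finset.mem_filter, not_not] at he
    obtain ⟨he, hp, hu⟩ := he
    obtain ⟨w, rfl⟩ := Sym2.mem_iff_exists.1 hu
    refine ⟨w, ?_, rfl⟩
    simp only [Finset.mem_filter]
    refine ⟨by simpa using he, hp⟩

theorem aux_mIn (G : SimpleGraph V) [DecidableRel G.Adj] (u : V) (T : Finset V) (hu : u ∉ T) :
    mIn G (insert u T) = mIn G T + (G.neighborFinset u ∩ T).card := by
  unfold mIn
  rw [aux_split G u, aux_split G u (fun e => ∀ v ∈ e, v ∈ T)]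
  have h1 : (G.edgeFinset.filter (fun e => (∀ v ∈ e, v ∈ insert u T) ∧ u ∉ e))
      = (G.edgeFinset.filter (fun e => (∀ v ∈ e, v ∈ T) ∧ u ∉ e)) := by
    apply Finset.filter_congr
    intro e _
    induction e with | _ a b => simp; grind
  have h2 : ((G.neighborFinset u).filter (fun w => ∀ v ∈ s(u, w), v ∈ insert u T))
      = G.neighborFinset u ∩ T := by
    ext w
    simp
    intro h
    have := h.ne
    grind
  have h3 : ((G.neighborFinset u).filter (fun w => ∀ v ∈ s(u, w), v ∈ T)) = ∅ := by
    ext w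
    simp [hu]
  rw [h1, h2, h3]
  simp

theorem aux_mCut (G : SimpleGraph V) [DecidableRel G.Adj] (u : V) (T : Finset V) (hu : u ∉ T) :
    mCut G (insert u T) + 2 * (G.neighborFinset u ∩ T).card = mCut G T + G.degree u := by
  unfold mCut
  rw [aux_split G u, aux_split G u (fun e => (∃ v ∈ e, v ∈ T) ∧ ∃ v ∈ e, v ∉ T)]
  have h1 : (G.edgeFinset.filter
        (fun e => ((∃ v ∈ e, v ∈ insert u T) ∧ ∃ v ∈ e, v ∉ insert u T) ∧ u ∉ e))
      = (G.edgeFinset.filter (fun e => ((∃ v ∈ e, v ∈ T) ∧ ∃ v ∈ e, v ∉ T) ∧ u ∉ e)) := by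
    apply Finset.filter_congr
    intro e _
    induction e with | _ a b => simp; grind
  have h2 : ((G.neighborFinset u).filter
        (fun w => (∃ v ∈ s(u, w), v ∈ insert u T) ∧ ∃ v ∈ s(u, w), v ∉ insert u T))
      = G.neighborFinset u \ T := by
    ext w
    simp
    intro h
    have := h.ne
    grind
  have h3 : ((G.neighborFinset u).filter
        (fun w => (∃ v ∈ s(u, w), v ∈ T) ∧ ∃ v ∈ s(u, w), v ∉ T))
      = G.neighborFinset u ∩ T := by
    ext w
    simp [hu]
  rw [h1, h2, h3]
  have h4 := Finset.card_inter_add_card_sdiff (G.neighborFinset u) T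
  rw [G.card_neighborFinset_eq_degree] at h4
  omega

theorem aux_val (G : SimpleGraph V) [DecidableRel G.Adj] (counter : V → ℕ) (α : ℝ)
    (u : V) (T : Finset V) (hu : u ∉ T) :
    val G counter α (insert u T) = val G counter α T + contribution G counter α u T := by
  have h1 : (mIn G (insert u T) : ℝ) = mIn G T + (G.neighborFinset u ∩ T).card := by
    exact_mod_cast aux_mIn G u T hu
  have h2 : (mCut G (insert u T) : ℝ) + 2 * (G.neighborFinset u ∩ T).card
      = mCut G T + G.degree u := by
    exact_mod_cast aux_mCut G u T hu
  have h3 : (mCut G (insert u T) : ℝ)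
      = mCut G T + G.degree u - 2 * (G.neighborFinset u ∩ T).card := by linarith
  unfold _root_.val contribution degc
  rw [Finset.sum_insert hu, h1, h3]
  push_cast
  ring

/-- In a `c`-closed graph (for `1/3 < α ≤ 1`): if more than `(c−1)k` neighbors of
`v ∈ S` outside `S` have `degc` at least `degc(v)`, then `v` can be exchanged with
one of them without decreasing `val`. -/
theorem cclosed_exchange (G : SimpleGraph V) [DecidableRel G.Adj]
    (counter : V → ℕ) (α : ℝ) (hα1 : 1 / 3 < α) (hα2 : α ≤ 1)
    (c k : ℕ) (hc : 1 ≤ c) (hG : CClosed G c)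
    (S : Finset V) (hScard : S.card = k) (v : V) (hvS : v ∈ S)
    (X : Finset V) (hXsub : X ⊆ G.neighborFinset v \ S)
    (hXdegc : ∀ x ∈ X, degc G counter v ≤ degc G counter x)
    (hXcard : (c - 1) * k < X.card) :
    ∃ v' ∈ X, val G counter α (insert v' (S.erase v)) ≥ val G counter α S := by
  have key : ∃ x ∈ X, G.neighborFinset x ∩ S.erase v ⊆ G.neighborFinset v ∩ S.erase v := by
    by_contra! hcon
    have hsub : X ⊆ (S.filter (fun w => w ≠ v ∧ ¬ G.Adj w v)).biUnion
        (fun w => G.neighborFinset w ∩ G.neighborFinset v) := by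
      intro x hx
      have h := hcon x hx
      rw [Finset.not_subset] at h
      obtain ⟨w, hw, hw'⟩ := h
      have hxv := hXsub hx
      simp only [Finset.mem_inter, Finset.mem_erase, SimpleGraph.mem_neighborFinset,
        Finset.mem_sdiff, Finset.mem_biUnion, Finset.mem_filter] at *
      exact ⟨w, ⟨hw.2.2, hw.2.1, fun h => hw' ⟨h.symm, hw.2⟩⟩, hw.1.symm, hxv.1⟩
    have h1 := Finset.card_le_card hsub
    have h2 := Finset.card_biUnion_le_card_mul (S.filter (fun w => w ≠ v ∧ ¬ G.Adj w v))
        (fun w => G.neighborFinset w ∩ G.neighborFinset v) (c - 1) (by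
          intro w hw
          rw [Finset.mem_filter] at hw
          exact hG w v hw.2.1 hw.2.2)
    have h3 : (S.filter (fun w => w ≠ v ∧ ¬ G.Adj w v)).card ≤ k :=
      hScard ▸ Finset.card_filter_le _ _
    have h4 := Nat.mul_le_mul_right (c - 1) h3
    rw [mul_comm] at hXcard
    omega
  obtain ⟨x, hx, hsub⟩ := key
  refine ⟨x, hx, ?_⟩
  have hxS : x ∉ S := (Finset.mem_sdiff.1 (hXsub hx)).2
  have e1 := aux_val G counter α x (S.erase v) (fun h => hxS (Finset.mem_of_mem_erase h))
  have e2 := aux_val G counter α v (S.erase v) (Finset.notMem_erase v S)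
  rw [Finset.insert_erase hvS] at e2
  rw [e1, e2]
  unfold contribution
  have d1 : (degc G counter v : ℝ) ≤ degc G counter x := by exact_mod_cast hXdegc x hx
  have d2 : ((G.neighborFinset x ∩ S.erase v).card : ℝ)
      ≤ (G.neighborFinset v ∩ S.erase v).card := by exact_mod_cast Finset.card_le_card hsub
  have m1 := mul_le_mul_of_nonneg_left d1 (show 0 ≤ α by linarith)
  have m2 := mul_le_mul_of_nonneg_left d2 (show 0 ≤ 3 * α - 1 by linarith)
  linarith
end

section
/- Suppose counter(v) = 0 for every vertex v (so val(S) = α·m(S, V∖S) + (1−α)·m(S)). Let C and D be disjoint subsets of V such that every vertex of D has degree exactly z in G, let D* ⊆ D with |D*| = ℓ, and let S = C ∪ D*. Then val(S) = val(C) + α·z·ℓ + (1−3α)·(e(D*, C) + m(D*)), where e(D*, C) is the number of edges with one endpoint in D* and the other in C and m(D*) is the number of edges with both endpoints in D*. -/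
open Finset

variable {V : Type*} [Fintype V] [DecidableEq V]

/-- Number of edges of `G` between disjoint sets `A` and `B`. -/
def eBetween (G : SimpleGraph V) [DecidableRel G.Adj] (A B : Finset V) : ℕ :=
  ((A ×ˢ B).filter (fun p => G.Adj p.1 p.2)).card

theorem two_card_edge (G : SimpleGraph V) [DecidableRel G.Adj] (p : Sym2 V → Prop)
    [DecidablePred p] :
    2 * (G.edgeFinset.filter p).card = ∑ d : G.Dart, if p d.edge then 1 else 0 := by
  rw [← Finset.sum_fiberwise_of_maps_to (s := univ) (t := G.edgeFinset)
    (g := fun d : G.Dart => d.edge) (fun d _ => by simpa using d.edge_mem)]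
  rw [Finset.card_filter, Finset.mul_sum]
  refine Finset.sum_congr rfl fun e he => ?_
  rw [Finset.sum_congr rfl (g := fun _ => if p e then 1 else 0)
    (fun d hd => by rw [(Finset.mem_filter.mp hd).2])]
  rw [Finset.sum_const, G.dart_edge_fiber_card e (by simpa using he), smul_eq_mul]

theorem dart_sum_symm (G : SimpleGraph V) [DecidableRel G.Adj] (f : V → V → ℕ) :
    ∑ d : G.Dart, f d.fst d.snd = ∑ d : G.Dart, f d.snd d.fst :=
  Fintype.sum_equiv (Function.Involutive.toPerm _ SimpleGraph.Dart.symm_involutive) _ _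
    (fun _ => rfl)

theorem eBetween_dart (G : SimpleGraph V) [DecidableRel G.Adj] (A B : Finset V) :
    eBetween G A B = ∑ d : G.Dart, if d.fst ∈ A ∧ d.snd ∈ B then 1 else 0 := by
  rw [← Finset.card_filter, eBetween]
  symm
  refine Finset.card_bij (fun d _ => d.toProd) ?_ ?_ ?_
  · intro d hd
    simp only [mem_filter, mem_univ, true_and] at hd
    simp [hd, d.adj]
  · intro a _ b _ h
    exact SimpleGraph.Dart.ext _ _ h
  · intro b hb
    simp only [mem_filter, mem_product] at hb
    exact ⟨⟨b, hb.2⟩, by simpa using hb.1, rfl⟩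

theorem deg_dart (G : SimpleGraph V) [DecidableRel G.Adj] (A : Finset V) :
    ∑ v ∈ A, G.degree v = ∑ d : G.Dart, if d.fst ∈ A then 1 else 0 := by
  rw [← Finset.card_filter, Finset.card_eq_sum_card_fiberwise (f := fun d : G.Dart => d.fst)
    (t := A) (fun d hd => by simpa using hd)]
  refine Finset.sum_congr rfl fun v hv => ?_
  rw [← G.dart_fst_fiber_card_eq_degree v, Finset.filter_filter]
  congr 1
  ext d
  simp only [mem_filter, mem_univ, true_and]
  constructor
  · intro h
    exact ⟨h ▸ hv, h⟩
  · exact fun h => h.2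

theorem two_mIn (G : SimpleGraph V) [DecidableRel G.Adj] (S : Finset V) :
    2 * mIn G S = ∑ d : G.Dart, if d.fst ∈ S ∧ d.snd ∈ S then 1 else 0 := by
  rw [mIn, two_card_edge]
  refine Finset.sum_congr rfl fun d _ => ?_
  rcases d with ⟨⟨a, b⟩, h⟩
  simp [SimpleGraph.Dart.edge]

theorem two_mCut (G : SimpleGraph V) [DecidableRel G.Adj] (S : Finset V) :
    2 * mCut G S = ∑ d : G.Dart,
      if (d.fst ∈ S ∨ d.snd ∈ S) ∧ (d.fst ∉ S ∨ d.snd ∉ S) then 1 else 0 := by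
  rw [mCut, two_card_edge]
  refine Finset.sum_congr rfl fun d _ => ?_
  rcases d with ⟨⟨a, b⟩, h⟩
  simp [SimpleGraph.Dart.edge]

/-- With all counters zero, if every vertex of `D` has degree `z` and `D* ⊆ D` has
`ℓ` elements, then for `S = C ∪ D*` (with `C, D` disjoint):
`val(S) = val(C) + α·z·ℓ + (1−3α)·(e(D*,C) + m(D*))`. -/
theorem val_union_regular_part (G : SimpleGraph V) [DecidableRel G.Adj] (α : ℝ)
    (C D : Finset V) (hCD : Disjoint C D) (z : ℕ) (hdeg : ∀ w ∈ D, G.degree w = z)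
    (Dstar : Finset V) (hDs : Dstar ⊆ D) (ℓ : ℕ) (hℓ : Dstar.card = ℓ) :
    val G (fun _ => 0) α (C ∪ Dstar) =
      val G (fun _ => 0) α C + α * (z : ℝ) * (ℓ : ℝ) +
        (1 - 3 * α) * ((eBetween G Dstar C : ℝ) + (mIn G Dstar : ℝ)) := by
  have hdis : ∀ v, v ∈ C → v ∉ Dstar := fun v hv hd =>
    (Finset.disjoint_left.mp hCD hv) (hDs hd)
  have hz : ∑ v ∈ Dstar, G.degree v = ℓ * z := by
    rw [Finset.sum_congr rfl fun v hv => hdeg v (hDs hv)]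
    simp [hℓ]
  have e1 := eBetween_dart G Dstar C
  have e2 := e1
  rw [dart_sum_symm G (fun a b => if a ∈ Dstar ∧ b ∈ C then 1 else 0)] at e2
  have d1 := deg_dart G Dstar
  have d2 := d1
  rw [dart_sum_symm G (fun a _ => if a ∈ Dstar then 1 else 0)] at d2
  rw [hz] at d1 d2
  have hin : mIn G (C ∪ Dstar) = mIn G C + eBetween G Dstar C + mIn G Dstar := by
    have : 2 * mIn G (C ∪ Dstar) = 2 * mIn G C + (eBetween G Dstar C + eBetween G Dstar C)
        + 2 * mIn G Dstar := by
      nth_rewrite 1 [e1]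
      rw [e2, two_mIn, two_mIn, two_mIn, ← sum_add_distrib, ← sum_add_distrib,
        ← sum_add_distrib]
      refine Finset.sum_congr rfl fun d _ => ?_
      have h1 := hdis d.fst
      have h2 := hdis d.snd
      by_cases a1 : d.fst ∈ C <;> by_cases a2 : d.snd ∈ C <;>
        by_cases a3 : d.fst ∈ Dstar <;> by_cases a4 : d.snd ∈ Dstar <;> simp_all
    omega
  have hcut : mCut G (C ∪ Dstar) + 2 * eBetween G Dstar C + 2 * mIn G Dstar
      = mCut G C + ℓ * z := by
    have : 2 * mCut G (C ∪ Dstar) + (eBetween G Dstar C + eBetween G Dstar C)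
        + (eBetween G Dstar C + eBetween G Dstar C)
        + 2 * mIn G Dstar + 2 * mIn G Dstar = 2 * mCut G C + (ℓ * z + ℓ * z) := by
      have e3 : eBetween G Dstar C + eBetween G Dstar C = _ := congrArg₂ (· + ·) e1 e2
      have d3 : ℓ * z + ℓ * z = _ := congrArg₂ (· + ·) d1 d2
      rw [e3, d3, two_mIn, two_mCut, two_mCut]
      simp only [← sum_add_distrib]
      refine Finset.sum_congr rfl fun d _ => ?_
      have h1 := hdis d.fst
      have h2 := hdis d.snd
      by_cases a1 : d.fst ∈ C <;> by_cases a2 : d.snd ∈ C <;>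
        by_cases a3 : d.fst ∈ Dstar <;> by_cases a4 : d.snd ∈ Dstar <;> simp_all
    omega
  have hcut' : (mCut G (C ∪ Dstar) : ℝ) + 2 * eBetween G Dstar C + 2 * mIn G Dstar
      = mCut G C + ℓ * z := by exact_mod_cast hcut
  simp only [_root_.val, hin]
  push_cast
  simp only [sum_const_zero]
  linear_combination α * hcut'
end

section
/- Let 1 ≤ a ≤ b and k ≥ 1 be integers and let G be a K_{a,b}-free finite simple graph. If G has at least k + b·binom(k, a) + Σ_{ℓ=1}^{a−1} binom(a+b+ℓ−1, a+b−1)·binom(k, ℓ) vertices, then G contains an independent set of size k. -/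
open Finset

variable {V : Type*} [Fintype V] [DecidableEq V]

/-- `G` is `K_{a,b}`-free: it contains no complete bipartite subgraph with parts of
sizes `a` and `b`. -/
def KabFree (G : SimpleGraph V) (a b : ℕ) : Prop :=
  ¬ ∃ (A B : Finset V), Disjoint A B ∧ A.card = a ∧ B.card = b ∧
    ∀ u ∈ A, ∀ v ∈ B, G.Adj u v

/-- Ramsey's theorem inside a finite set of vertices, with the binomial bound. -/
theorem ramsey_aux (G : SimpleGraph V) (n : ℕ) : ∀ (s t : ℕ), s + t = n → ∀ W : Finset V,
    Nat.choose (s + t) s ≤ W.card →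
    (∃ C ⊆ W, C.card = s + 1 ∧ ∀ u ∈ C, ∀ w ∈ C, u ≠ w → G.Adj u w) ∨
    (∃ I ⊆ W, I.card = t + 1 ∧ IndepOn G I) := by
  classical
  induction n with
  | zero =>
    intro s t hst W hW
    obtain ⟨rfl, rfl⟩ : s = 0 ∧ t = 0 := by omega
    left
    simp only [add_zero, Nat.choose_self] at hW
    obtain ⟨v, hv⟩ := Finset.card_pos.mp hW
    refine ⟨{v}, by simpa using hv, by simp, ?_⟩
    intro u hu w hw huw
    simp only [Finset.mem_singleton] at hu hw
    exact absurd (hu.trans hw.symm) huw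
  | succ n ih =>
    intro s t hst W hW
    have hpos : 0 < W.card := lt_of_lt_of_le (Nat.choose_pos (by omega)) hW
    obtain ⟨v, hv⟩ := Finset.card_pos.mp hpos
    rcases s with _ | s
    · left
      refine ⟨{v}, by simpa using hv, by simp, ?_⟩
      intro u hu w hw huw
      simp only [Finset.mem_singleton] at hu hw
      exact absurd (hu.trans hw.symm) huw
    rcases t with _ | t
    · right
      refine ⟨{v}, by simpa using hv, by simp, ?_⟩
      intro u hu w hw huw
      simp only [Finset.mem_singleton] at hu hw
      exact absurd (hu.trans hw.symm) huw
    have hsplit := Finset.card_filter_add_card_filter_not (s := W.erase v) (fun w => G.Adj v w)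
    have herase := Finset.card_erase_of_mem hv
    have hch : Nat.choose (s + 1 + (t + 1)) (s + 1)
        = Nat.choose (s + (t + 1)) s + Nat.choose (s + 1 + t) (s + 1) := by
      have e1 : s + 1 + (t + 1) = (s + t + 1) + 1 := by omega
      have e2 : s + (t + 1) = s + t + 1 := by omega
      have e3 : s + 1 + t = s + t + 1 := by omega
      rw [e1, e2, e3, Nat.choose_succ_succ]
    have hcases : Nat.choose (s + (t + 1)) s ≤ ((W.erase v).filter (fun w => G.Adj v w)).card ∨
        Nat.choose (s + 1 + t) (s + 1) ≤ ((W.erase v).filter (fun w => ¬ G.Adj v w)).card := by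
      omega
    rcases hcases with h | h
    · rcases ih s (t + 1) (by omega) _ h with ⟨C, hCW, hC, hcl⟩ | ⟨I, hIW, hI, hind⟩
      · left
        have hvC : v ∉ C := fun hc => by simpa using hCW hc
        have hadj : ∀ w ∈ C, G.Adj v w := fun w hw => (Finset.mem_filter.mp (hCW hw)).2
        refine ⟨insert v C, ?_, by rw [Finset.card_insert_of_notMem hvC, hC], ?_⟩
        · intro x hx
          rcases Finset.mem_insert.mp hx with rfl | hx
          · exact hv
          · exact Finset.mem_of_mem_erase (Finset.mem_filter.mp (hCW hx)).1
        · intro u hu w hw huw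
          rcases Finset.mem_insert.mp hu with hu1 | hu2 <;>
            rcases Finset.mem_insert.mp hw with hw1 | hw2
          · exact absurd (hu1.trans hw1.symm) huw
          · subst hu1; exact hadj w hw2
          · subst hw1; exact (hadj u hu2).symm
          · exact hcl u hu2 w hw2 huw
      · right
        exact ⟨I, fun x hx => Finset.mem_of_mem_erase (Finset.mem_filter.mp (hIW hx)).1, hI, hind⟩
    · rcases ih (s + 1) t (by omega) _ h with ⟨C, hCW, hC, hcl⟩ | ⟨I, hIW, hI, hind⟩
      · left
        exact ⟨C, fun x hx => Finset.mem_of_mem_erase (Finset.mem_filter.mp (hCW hx)).1, hC, hcl⟩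
      · right
        have hvC : v ∉ I := fun hc => by simpa using hIW hc
        have hadj : ∀ w ∈ I, ¬ G.Adj v w := fun w hw => (Finset.mem_filter.mp (hIW hw)).2
        refine ⟨insert v I, ?_, by rw [Finset.card_insert_of_notMem hvC, hI], ?_⟩
        · intro x hx
          rcases Finset.mem_insert.mp hx with rfl | hx
          · exact hv
          · exact Finset.mem_of_mem_erase (Finset.mem_filter.mp (hIW hx)).1
        · intro u hu w hw huw
          rcases Finset.mem_insert.mp hu with hu1 | hu2 <;>
            rcases Finset.mem_insert.mp hw with hw1 | hw2
          · exact absurd (hu1.trans hw1.symm) huw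
          · subst hu1; exact hadj w hw2
          · subst hw1; exact fun h => hadj u hu2 h.symm
          · exact hind u hu2 w hw2 huw

/-- Ramsey-type bound in `K_{a,b}`-free graphs: a `K_{a,b}`-free graph on at least
`k + b·C(k,a) + Σ_{ℓ=1}^{a−1} C(a+b+ℓ−1, a+b−1)·C(k,ℓ)` vertices contains an
independent set of size `k`. -/
theorem kabfree_indep_set (G : SimpleGraph V)
    (a b k : ℕ) (ha : 1 ≤ a) (hab : a ≤ b) (hk : 1 ≤ k) (hG : KabFree G a b)
    (hcard : k + b * Nat.choose k a +
        ∑ l ∈ Finset.Icc 1 (a - 1), Nat.choose (a + b + l - 1) (a + b - 1) * Nat.choose k l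
      ≤ Fintype.card V) :
    ∃ I : Finset V, I.card = k ∧ IndepOn G I := by
  classical
  by_contra hno
  have hlt : ∀ I : Finset V, IndepOn G I → I.card < k := by
    intro I hI
    by_contra hc
    obtain ⟨J, hJI, hJ⟩ := Finset.exists_subset_card_eq (not_lt.mp hc)
    exact hno ⟨J, hJ, fun u hu w hw => hI u (hJI hu) w (hJI hw)⟩
  obtain ⟨I, hImem, hmax⟩ := Finset.exists_max_image
    ((Finset.univ : Finset (Finset V)).filter (fun I => IndepOn G I)) Finset.card
    ⟨∅, Finset.mem_filter.mpr ⟨Finset.mem_univ _, fun u hu => absurd hu (Finset.notMem_empty u)⟩⟩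
  have hI : IndepOn G I := (Finset.mem_filter.mp hImem).2
  have hmax' : ∀ J : Finset V, IndepOn G J → J.card ≤ I.card := fun J hJ =>
    hmax J (by simp [hJ])
  have hIk := hlt I hI
  -- vertices with at least `a` neighbours in `I`
  let P : Finset V → Finset V := fun S => Finset.univ.filter (fun v => ∀ u ∈ S, G.Adj u v)
  -- vertices outside `I` whose neighbourhood in `I` is exactly `S`
  let Q : Finset V → Finset V := fun S =>
    Finset.univ.filter (fun v => v ∉ I ∧ I.filter (fun u => G.Adj u v) = S)
  have hP : ∀ S ∈ I.powersetCard a, (P S).card ≤ b := by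
    intro S hS
    by_contra hc
    obtain ⟨B, hBP, hB⟩ := Finset.exists_subset_card_eq (le_of_lt (not_le.mp hc))
    refine hG ⟨S, B, ?_, (Finset.mem_powersetCard.mp hS).2, hB, ?_⟩
    · rw [Finset.disjoint_left]
      intro x hxS hxB
      exact G.loopless.irrefl x ((Finset.mem_filter.mp (hBP hxB)).2 x hxS)
    · intro u hu v hv
      exact (Finset.mem_filter.mp (hBP hv)).2 u hu
  have hQ : ∀ l, ∀ S ∈ I.powersetCard l,
      (Q S).card ≤ Nat.choose (a + b + l - 1) (a + b - 1) := by
    intro l S hS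
    obtain ⟨hSI, hSl⟩ := Finset.mem_powersetCard.mp hS
    by_contra hc
    have e : a + b + l - 1 = a + b - 1 + l := by omega
    rw [e] at hc
    rcases ramsey_aux G _ (a + b - 1) l rfl (Q S) (le_of_lt (not_le.mp hc)) with
      ⟨C, -, hC, hcl⟩ | ⟨J, hJQ, hJ, hind⟩
    · obtain ⟨A, hAC, hA⟩ := Finset.exists_subset_card_eq (s := C) (n := a) (by omega)
      have hB : (C \ A).card = b := by
        rw [Finset.card_sdiff_of_subset hAC]; omega
      refine hG ⟨A, C \ A, Finset.disjoint_sdiff, hA, hB, ?_⟩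
      intro u hu v hv
      obtain ⟨hvC, hvA⟩ := Finset.mem_sdiff.mp hv
      exact hcl u (hAC hu) v hvC (fun h => hvA (h ▸ hu))
    · have hJ' : ∀ v ∈ J, v ∉ I ∧ I.filter (fun u => G.Adj u v) = S := fun v hv =>
        (Finset.mem_filter.mp (hJQ hv)).2
      have hcross : ∀ u ∈ I \ S, ∀ v ∈ J, ¬ G.Adj u v := by
        intro u hu v hv h
        obtain ⟨huI, huS⟩ := Finset.mem_sdiff.mp hu
        apply huS
        rw [← (hJ' v hv).2]
        exact Finset.mem_filter.mpr ⟨huI, h⟩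
      have hdisj : Disjoint (I \ S) J := by
        rw [Finset.disjoint_left]
        intro x hx hxJ
        exact (hJ' x hxJ).1 (Finset.mem_sdiff.mp hx).1
      have hle := hmax' ((I \ S) ∪ J) (by
        intro u hu w hw huw
        rcases Finset.mem_union.mp hu with hu | hu <;>
          rcases Finset.mem_union.mp hw with hw | hw
        · exact hI u (Finset.mem_sdiff.mp hu).1 w (Finset.mem_sdiff.mp hw).1 huw
        · exact hcross u hu w hw
        · exact fun h => hcross w hw u hu h.symm
        · exact hind u hu w hw huw)
      rw [Finset.card_union_of_disjoint hdisj, Finset.card_sdiff_of_subset hSI] at hle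
      have := Finset.card_le_card hSI
      omega
  have hcover : (Finset.univ : Finset V) ⊆ (I ∪ (I.powersetCard a).biUnion P) ∪
      (Finset.Icc 1 (a - 1)).biUnion (fun l => (I.powersetCard l).biUnion Q) := by
    intro v _
    by_cases hvI : v ∈ I
    · exact Finset.mem_union_left _ (Finset.mem_union_left _ hvI)
    by_cases hd : a ≤ (I.filter (fun u => G.Adj u v)).card
    · apply Finset.mem_union_left
      apply Finset.mem_union_right
      obtain ⟨S, hS, hSa⟩ := Finset.exists_subset_card_eq hd
      refine Finset.mem_biUnion.mpr ⟨S, Finset.mem_powersetCard.mpr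
        ⟨hS.trans (Finset.filter_subset _ _), hSa⟩, ?_⟩
      exact Finset.mem_filter.mpr ⟨Finset.mem_univ _, fun u hu =>
        (Finset.mem_filter.mp (hS hu)).2⟩
    · apply Finset.mem_union_right
      have hpos : 0 < (I.filter (fun u => G.Adj u v)).card := by
        by_contra h0
        have hemp : I.filter (fun u => G.Adj u v) = ∅ := Finset.card_eq_zero.mp (by omega)
        have hn : ∀ u ∈ I, ¬ G.Adj u v := fun u hu h => by
          have : u ∈ I.filter (fun u => G.Adj u v) := Finset.mem_filter.mpr ⟨hu, h⟩
          rw [hemp] at this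
          simp at this
        have hle := hmax' (insert v I) (by
          intro u hu w hw huw
          rcases Finset.mem_insert.mp hu with hu1 | hu2 <;>
            rcases Finset.mem_insert.mp hw with hw1 | hw2
          · exact absurd (hu1.trans hw1.symm) huw
          · subst hu1; exact fun h => hn w hw2 h.symm
          · subst hw1; exact hn u hu2
          · exact hI u hu2 w hw2 huw)
        rw [Finset.card_insert_of_notMem hvI] at hle
        omega
      refine Finset.mem_biUnion.mpr ⟨_, Finset.mem_Icc.mpr ⟨hpos, by omega⟩, ?_⟩
      exact Finset.mem_biUnion.mpr ⟨I.filter (fun u => G.Adj u v), Finset.mem_powersetCard.mpr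
        ⟨Finset.filter_subset _ _, rfl⟩, Finset.mem_filter.mpr ⟨Finset.mem_univ _, hvI, rfl⟩⟩
  have h1 := Finset.card_le_card hcover
  rw [Finset.card_univ] at h1
  have h2 := Finset.card_union_le (I ∪ (I.powersetCard a).biUnion P)
      ((Finset.Icc 1 (a - 1)).biUnion (fun l => (I.powersetCard l).biUnion Q))
  have h3 := Finset.card_union_le I ((I.powersetCard a).biUnion P)
  have h4 : ((I.powersetCard a).biUnion P).card ≤ b * Nat.choose k a := by
    have := Finset.card_biUnion_le_card_mul _ P b hP
    rw [Finset.card_powersetCard, mul_comm] at this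
    exact this.trans (Nat.mul_le_mul_left _ (Nat.choose_le_choose _ hIk.le))
  have h5 : ((Finset.Icc 1 (a - 1)).biUnion (fun l => (I.powersetCard l).biUnion Q)).card ≤
      ∑ l ∈ Finset.Icc 1 (a - 1), Nat.choose (a + b + l - 1) (a + b - 1) * Nat.choose k l := by
    refine Finset.card_biUnion_le.trans (Finset.sum_le_sum fun l _ => ?_)
    have := Finset.card_biUnion_le_card_mul _ Q _ (hQ l)
    rw [Finset.card_powersetCard, mul_comm] at this
    exact this.trans (Nat.mul_le_mul_left _ (Nat.choose_le_choose _ hIk.le))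
  omega
end

section
/- Let 1 ≤ a ≤ b be integers, let G be a K_{a,b}-free finite simple graph on vertex set V, and let I ⊆ V be any set of vertices. Then the number of vertices v ∈ V with |N(v) ∩ I| ≥ a is at most b·binom(|I|, a). -/
open Finset

variable {V : Type*} [Fintype V] [DecidableEq V]

/-- In a `K_{a,b}`-free graph, at most `b·C(|I|,a)` vertices have at least `a`
neighbors in a given set `I`. -/
theorem kabfree_few_high_degree (G : SimpleGraph V) [DecidableRel G.Adj]
    (a b : ℕ) (ha : 1 ≤ a) (hab : a ≤ b) (hG : KabFree G a b) (I : Finset V) :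
    (Finset.univ.filter (fun v => a ≤ (G.neighborFinset v ∩ I).card)).card ≤
      b * Nat.choose I.card a := by
  have hsub : (Finset.univ.filter (fun v => a ≤ (G.neighborFinset v ∩ I).card)) ⊆
      (I.powersetCard a).biUnion
        (fun A => Finset.univ.filter (fun v => ∀ u ∈ A, G.Adj u v)) := by
    intro v hv
    obtain ⟨A, hA, hc⟩ := Finset.exists_subset_card_eq (Finset.mem_filter.1 hv).2
    refine Finset.mem_biUnion.2 ⟨A, Finset.mem_powersetCard.2
      ⟨hA.trans Finset.inter_subset_right, hc⟩, ?_⟩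
    refine Finset.mem_filter.2 ⟨Finset.mem_univ _, fun u hu => ?_⟩
    have h := Finset.mem_of_mem_inter_left (hA hu)
    exact ((G.mem_neighborFinset v u).1 h).symm
  refine (Finset.card_le_card hsub).trans ?_
  refine (Finset.card_biUnion_le_card_mul _ _ b ?_).trans ?_
  · intro A hA
    by_contra hlt
    obtain ⟨B, hB, hc⟩ := Finset.exists_subset_card_eq (le_of_not_ge hlt)
    have hadj : ∀ u ∈ A, ∀ v ∈ B, G.Adj u v := fun u hu v hv =>
      (Finset.mem_filter.1 (hB hv)).2 u hu
    exact hG ⟨A, B, Finset.disjoint_left.2 fun x hx hx' => G.irrefl (hadj x hx x hx'),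
      (Finset.mem_powersetCard.1 hA).2, hc, hadj⟩
  · rw [Finset.card_powersetCard, Nat.mul_comm]
end

section
/- Let 2 ≤ a ≤ b and k ≥ 1 be integers and let G be a K_{a,b}-free finite simple graph on vertex set V. Suppose some vertex v₀ has an independent set I₀ ⊆ N(v₀) with |I₀| > b·k^{a−1}. Then there exist an integer i with 1 ≤ i ≤ a−1, a set X of exactly i vertices with v₀ ∈ X, and an independent set I contained in the common neighborhood ∩_{x∈X} N(x), such that |I| > b·k^{a−i} and every vertex u ∈ V∖X satisfies |N(u) ∩ I| ≤ b·k^{a−i−1}. -/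
open Finset

variable {V : Type*} [Fintype V] [DecidableEq V]

/-- In a `K_{a,b}`-free graph, a vertex with a huge independent set in its
neighborhood yields a set `X` of `i ≤ a−1` vertices and a large independent set `I`
in the common neighborhood of `X` such that every vertex outside `X` has few
neighbors in `I`. -/
theorem kabfree_find_X_I (G : SimpleGraph V) [DecidableRel G.Adj]
    (a b k : ℕ) (ha : 2 ≤ a) (hab : a ≤ b) (hk : 1 ≤ k) (hG : KabFree G a b)
    (v₀ : V) (I₀ : Finset V) (hI₀sub : I₀ ⊆ G.neighborFinset v₀)
    (hI₀ind : IndepOn G I₀) (hI₀card : b * k ^ (a - 1) < I₀.card) :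
    ∃ (i : ℕ) (X I : Finset V), 1 ≤ i ∧ i ≤ a - 1 ∧ X.card = i ∧ v₀ ∈ X ∧
      IndepOn G I ∧ (∀ x ∈ X, I ⊆ G.neighborFinset x) ∧
      b * k ^ (a - i) < I.card ∧
      ∀ u : V, u ∉ X → (G.neighborFinset u ∩ I).card ≤ b * k ^ (a - i - 1) := by
  by_contra hcon
  have key : ∀ n : ℕ, n + 1 ≤ a → ∃ X I : Finset V, X.card = n + 1 ∧ v₀ ∈ X ∧
      IndepOn G I ∧ (∀ x ∈ X, I ⊆ G.neighborFinset x) ∧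
      b * k ^ (a - (n + 1)) < I.card := by
    intro n
    induction n with
    | zero =>
      intro _
      refine ⟨{v₀}, I₀, by simp, by simp, hI₀ind, ?_, by simpa using hI₀card⟩
      intro x hx
      rw [Finset.mem_singleton] at hx
      subst hx
      exact hI₀sub
    | succ n ih =>
      intro hn
      obtain ⟨X, I, hX, hv, hI, hXI, hc⟩ := ih (by omega)
      by_contra hno
      apply hcon
      refine ⟨n + 1, X, I, by omega, by omega, hX, hv, hI, hXI, hc, ?_⟩
      intro u hu
      by_contra hlt
      push Not at hlt
      apply hno
      refine ⟨insert u X, G.neighborFinset u ∩ I, ?_, ?_, ?_, ?_, ?_⟩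
      · rw [Finset.card_insert_of_notMem hu, hX]
      · exact Finset.mem_insert_of_mem hv
      · intro p hp q hq
        exact hI p (Finset.mem_inter.1 hp).2 q (Finset.mem_inter.1 hq).2
      · intro x hx
        rcases Finset.mem_insert.1 hx with rfl | hx
        · exact Finset.inter_subset_left
        · exact Finset.inter_subset_right.trans (hXI x hx)
      · rwa [Nat.sub_sub] at hlt
  obtain ⟨X, I, hX, -, -, hXI, hc⟩ := key (a - 1) (by omega)
  have e : a - 1 + 1 = a := by omega
  rw [e] at hX hc
  simp only [Nat.sub_self, pow_zero, mul_one] at hc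
  obtain ⟨B, hB, hBc⟩ := Finset.exists_subset_card_eq hc.le
  have hadj : ∀ u ∈ X, ∀ v ∈ B, G.Adj u v := by
    intro u hu v hv
    have := hXI u hu (hB hv)
    simpa using this
  refine hG ⟨X, B, ?_, hX, hBc, hadj⟩
  rw [Finset.disjoint_left]
  intro x hx hx'
  exact G.loopless.irrefl x (hadj x hx x hx')
end

section
/- Suppose 0 ≤ α ≤ 1, let k ∈ ℕ, let t be a real number, and for x ∈ ℕ let V_x = {w ∈ V : degc(w) ≥ x}. Suppose |V_x| ≥ k, suppose there exists a set S ⊆ V with |S| = k and val(S) ≥ t, and let v ∈ V be a vertex with α·degc(v) < α·x − |(1−3α)·k|. Then there exists a set S' ⊆ V with |S'| = k, val(S') ≥ t and v ∉ S'. -/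
open Finset

variable {V : Type*} [Fintype V] [DecidableEq V]

lemma mIn_insert_aux (G : SimpleGraph V) [DecidableRel G.Adj] (T : Finset V) (u : V)
    (hu : u ∉ T) : mIn G (insert u T) = mIn G T + (G.neighborFinset u ∩ T).card := by
  have himg : ((G.neighborFinset u ∩ T).image (fun w => s(u, w))).card
      = (G.neighborFinset u ∩ T).card := by
    apply Finset.card_image_of_injective
    intro a b h
    exact Sym2.congr_right.1 h
  unfold mIn
  rw [← himg, ← Finset.card_union_of_disjoint]
  · congr 1
    ext e
    induction e using Sym2.ind with
    | _ a b =>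
      simp only [Finset.mem_filter, Finset.mem_union, Finset.mem_image, Finset.mem_inter,
        SimpleGraph.mem_edgeFinset, SimpleGraph.mem_edgeSet, SimpleGraph.mem_neighborFinset,
        Sym2.mem_iff, forall_eq_or_imp, forall_eq, Finset.mem_insert, Sym2.eq_iff]
      constructor
      · rintro ⟨h, ha, hb⟩
        rcases ha with rfl | ha
        · rcases hb with rfl | hb
          · exact absurd h (G.loopless.irrefl _)
          · exact Or.inr ⟨b, ⟨h, hb⟩, Or.inl ⟨rfl, rfl⟩⟩
        · rcases hb with rfl | hb
          · exact Or.inr ⟨a, ⟨h.symm, ha⟩, Or.inr ⟨rfl, rfl⟩⟩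
          · exact Or.inl ⟨h, ha, hb⟩
      · rintro (⟨h, ha, hb⟩ | ⟨w, ⟨h, hw⟩, (⟨rfl, rfl⟩ | ⟨rfl, rfl⟩)⟩)
        · exact ⟨h, Or.inr ha, Or.inr hb⟩
        · exact ⟨h, Or.inl rfl, Or.inr hw⟩
        · exact ⟨h.symm, Or.inr hw, Or.inl rfl⟩
  · rw [Finset.disjoint_left]
    intro e he he'
    obtain ⟨w, _, rfl⟩ := Finset.mem_image.1 he'
    exact hu ((Finset.mem_filter.1 he).2 u (by simp))

lemma mCut_insert_aux (G : SimpleGraph V) [DecidableRel G.Adj] (T : Finset V) (u : V)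
    (hu : u ∉ T) : mCut G (insert u T) + 2 * mIn G (insert u T)
      = mCut G T + 2 * mIn G T + G.degree u := by
  rw [← G.card_incidenceFinset_eq_degree, G.incidenceFinset_eq_filter]
  unfold mCut mIn
  simp only [Finset.card_filter, Finset.mul_sum, ← Finset.sum_add_distrib]
  apply Finset.sum_congr rfl
  intro e he
  induction e using Sym2.ind with
  | _ a b =>
    have hab : a ≠ b := G.ne_of_adj (by simpa using he)
    simp only [Sym2.mem_iff, forall_eq_or_imp, forall_eq, exists_eq_or_imp, exists_eq_left,
      Finset.mem_insert]
    by_cases h1 : a = u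
    · subst h1
      have : b ≠ a := hab.symm
      by_cases hb : b ∈ T <;> simp [hu, hb, this]
    · by_cases h2 : b = u
      · subst h2
        by_cases ha : a ∈ T <;> simp [hu, ha, h1]
      · have h1' : u ≠ a := Ne.symm h1
        have h2' : u ≠ b := Ne.symm h2
        simp [h1, h2, h1', h2']

lemma val_insert_aux (G : SimpleGraph V) [DecidableRel G.Adj] (counter : V → ℕ) (α : ℝ)
    (T : Finset V) (u : V) (hu : u ∉ T) :
    val G counter α (insert u T) = val G counter α T + contribution G counter α u T := by
  have h1 : (mIn G (insert u T) : ℝ) = mIn G T + (G.neighborFinset u ∩ T).card := by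
    exact_mod_cast mIn_insert_aux G T u hu
  have h2 : (mCut G (insert u T) : ℝ) + 2 * mIn G (insert u T)
      = mCut G T + 2 * mIn G T + G.degree u := by
    exact_mod_cast mCut_insert_aux G T u hu
  have h3 : (mCut G (insert u T) : ℝ)
      = mCut G T + G.degree u - 2 * (G.neighborFinset u ∩ T).card := by linarith
  unfold _root_.val contribution degc
  rw [Finset.sum_insert hu, h3, h1]
  push_cast
  ring

/-- If `0 ≤ α ≤ 1`, at least `k` vertices have `degc ≥ x`, some `k`-set has value at
least `t`, and `α·degc(v) < α·x − |(1−3α)k|`, then some `k`-set of value at least `t`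
avoids `v`. -/
theorem exclude_low_degc (G : SimpleGraph V) [DecidableRel G.Adj]
    (counter : V → ℕ) (α : ℝ) (hα0 : 0 ≤ α) (hα1 : α ≤ 1) (k x : ℕ) (t : ℝ)
    (hVx : k ≤ (Finset.univ.filter (fun w => x ≤ degc G counter w)).card)
    (S : Finset V) (hScard : S.card = k) (hSval : val G counter α S ≥ t)
    (v : V)
    (hv : α * (degc G counter v : ℝ) < α * (x : ℝ) - |(1 - 3 * α) * (k : ℝ)|) :
    ∃ S' : Finset V, S'.card = k ∧ val G counter α S' ≥ t ∧ v ∉ S' := by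
  by_cases hvS : v ∈ S
  swap
  · exact ⟨S, hScard, hSval, hvS⟩
  have hTcard : (S.erase v).card < k := by
    rw [← hScard]; exact Finset.card_erase_lt_of_mem hvS
  obtain ⟨w, hw, hwT⟩ := Finset.exists_mem_notMem_of_card_lt_card (lt_of_lt_of_le hTcard hVx)
  have hwx : (x : ℝ) ≤ degc G counter w := by exact_mod_cast (Finset.mem_filter.1 hw).2
  have hwx' := mul_le_mul_of_nonneg_left hwx hα0
  have habs := abs_nonneg ((1 - 3 * α) * (k : ℝ))
  have hne : v ≠ w := by
    rintro rfl
    linarith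
  have hvT : v ∉ S.erase v := Finset.notMem_erase v S
  refine ⟨insert w (S.erase v), ?_, ?_, ?_⟩
  · rw [Finset.card_insert_of_notMem hwT, Finset.card_erase_add_one hvS, hScard]
  · have e1 := val_insert_aux G counter α _ w hwT
    have e2 := val_insert_aux G counter α _ v hvT
    rw [Finset.insert_erase hvS] at e2
    have ha : ((G.neighborFinset w ∩ S.erase v).card : ℝ) ≤ k := by
      exact_mod_cast (Finset.card_le_card Finset.inter_subset_right).trans hTcard.le
    have hb : ((G.neighborFinset v ∩ S.erase v).card : ℝ) ≤ k := by
      exact_mod_cast (Finset.card_le_card Finset.inter_subset_right).trans hTcard.le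
    have ha0 : (0 : ℝ) ≤ ((G.neighborFinset w ∩ S.erase v).card : ℝ) := Nat.cast_nonneg _
    have hb0 : (0 : ℝ) ≤ ((G.neighborFinset v ∩ S.erase v).card : ℝ) := Nat.cast_nonneg _
    unfold contribution at e1 e2
    generalize ((G.neighborFinset w ∩ S.erase v).card : ℝ) = a at *
    generalize ((G.neighborFinset v ∩ S.erase v).card : ℝ) = b at *
    have hd : |(1 - 3 * α) * (b - a)| ≤ |(1 - 3 * α) * (k : ℝ)| := by
      rw [abs_mul, abs_mul]
      apply mul_le_mul_of_nonneg_left _ (abs_nonneg _)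
      rw [abs_of_nonneg (ha0.trans ha)]
      exact abs_le.2 ⟨by linarith, by linarith⟩
    have hd' := (le_abs_self _).trans hd
    have hmul : (1 - 3 * α) * (b - a) = (1 - 3 * α) * b - (1 - 3 * α) * a := by ring
    linarith
  · simp [hne]
end
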